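/- Fix p ∈ (1/2, 1) and α ∈ (0,1). For every constant A > 0 there is a constant C > 0 such that for all λ ≥ 3 and all positive integers k with |k − (log_{1/√(pq)} λ − (ln(p/q) / (2 ln^{3/2}(1/√(pq)))) · Φ^{-1}(α) · √(ln λ))| ≤ A, one has |E X̄_k(λ) − α| ≤ C k^{−1/2}. -/

import Mathlib

/-!
Poissonized model for partial fillup in tries (Janson–Szpankowski).

An outcome `ω : ℕ × (ℕ → ℕ → Bool)` consists of the number `ω.1 = N` of inserted
strings and a source `ω.2` of infinitely many strings, where `ω.2 i j` is the `j`-th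
bit of the `i`-th string; the inserted strings are the strings `0, …, N-1`.  Under the
Poissonized measure, `N ~ Po(λ)` is independent of the strings, and all bits are
i.i.d. with `P(bit = 1) = p`.
-/

open MeasureTheory ProbabilityTheory Real Filter

/-- The number of strings among the first `n` (encoded in `ω`) whose first `k` bits
form the word `r ∈ {0,1}^k`. -/
def prefCount (ω : ℕ → ℕ → Bool) (n k : ℕ) (r : Fin k → Bool) : ℕ :=
  ((Finset.range n).filter fun i => ∀ j : Fin k, ω i j = r j).card

/-- `X_k`: the number of words `r ∈ {0,1}^k` that are prefixes of at least two of the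
first `n` strings. -/
def fillCount (ω : ℕ → ℕ → Bool) (n k : ℕ) : ℕ :=
  (Finset.univ.filter fun r : Fin k → Bool => 2 ≤ prefCount ω n k r).card

/-- `ν` is a probability measure on `ℕ → ℕ → Bool` under which all the bits
`ω i j` are i.i.d. with `P(bit = 1) = p` (characterized by cylinder probabilities). -/
def IIDBits (p : ℝ) (ν : Measure (ℕ → ℕ → Bool)) : Prop :=
  IsProbabilityMeasure ν ∧
    ∀ (S : Finset (ℕ × ℕ)) (b : ℕ × ℕ → Bool),
      ν {ω | ∀ s ∈ S, ω s.1 s.2 = b s} =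
        ∏ s ∈ S, ENNReal.ofReal (if b s then p else 1 - p)

/-- The Poissonized model: the number of inserted strings is `Po(λ)`, independent of the
i.i.d. source `ν` of strings. -/
noncomputable def poModel (lam : NNReal) (ν : Measure (ℕ → ℕ → Bool)) :
    Measure (ℕ × (ℕ → ℕ → Bool)) :=
  (ProbabilityTheory.poissonMeasure lam).prod ν

/-- `X_k(λ)` as a random variable on the Poissonized model: the number of words
`r ∈ {0,1}^k` that are prefixes of at least two of the `N` inserted strings. -/
def fillCountPo (k : ℕ) (ω : ℕ × (ℕ → ℕ → Bool)) : ℕ :=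
  fillCount ω.2 ω.1 k

/-- `X̄_k(λ) = X_k(λ) / 2^k`. -/
noncomputable def fracFilledPo (k : ℕ) (ω : ℕ × (ℕ → ℕ → Bool)) : ℝ :=
  (fillCountPo k ω : ℝ) / 2 ^ k

/-!
By Poisson thinning the number of inserted strings beginning with a word `r` is `Po(λ P(r))`, so
`E X̄_k` is the average over `r ∈ {0,1}^k` of `1 - (1 + λ P(r)) exp (-λ P(r))`. With
`c = ln(p/q) / 2` and `L = ln(1/√(pq))` one has `λ P(r) = exp (ln λ - k L + c S)`, where `S` is the
number of ones minus the number of zeros of `r`. Hence `E X̄_k` is the expectation of a smooth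
threshold function at `(ln λ - k L) / c + S`, with `S` the endpoint of a simple random walk of
length `k`. A Berry–Esseen bound for test functions that differ from `Φ` by `O(1 / (1 + x²))` gives
`E X̄_k = Φ((ln λ - k L) / (c √(k + 1))) + O(k^{-1/2})`, and the condition on `k` says exactly that
the argument of `Φ` is `Φ⁻¹(α) + O(k^{-1/2})`.
-/

local notation "Φ" => cdf (gaussianReal 0 1)

local notation "φ" => gaussianPDFReal 0 1

/-! ### The normal distribution function -/

lemma continuous_gaussianPDFReal (μ : ℝ) (v : NNReal) : Continuous (gaussianPDFReal μ v) := by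
  unfold gaussianPDFReal
  fun_prop

lemma cdf_gaussianReal_eq_integral (μ : ℝ) {v : NNReal} (hv : v ≠ 0) (x : ℝ) :
    cdf (gaussianReal μ v) x = ∫ y in Set.Iic x, gaussianPDFReal μ v y := by
  rw [cdf_eq_real, measureReal_def, gaussianReal_apply_eq_integral _ hv,
    ENNReal.toReal_ofReal (integral_nonneg fun y => gaussianPDFReal_nonneg _ _ _)]

lemma hasDerivAt_cdf_gaussianReal (μ : ℝ) {v : NNReal} (hv : v ≠ 0) (x : ℝ) :
    HasDerivAt (cdf (gaussianReal μ v)) (gaussianPDFReal μ v x) x := by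
  have hint (s : Set ℝ) : IntegrableOn (gaussianPDFReal μ v) s :=
    (integrable_gaussianPDFReal μ v).integrableOn
  have hcont := continuous_gaussianPDFReal μ v
  have heq : cdf (gaussianReal μ v) = fun y =>
      cdf (gaussianReal μ v) 0 + ∫ t in (0 : ℝ)..y, gaussianPDFReal μ v t := by
    funext y
    rw [← intervalIntegral.integral_Iic_sub_Iic (hint _) (hint _),
      ← cdf_gaussianReal_eq_integral μ hv, ← cdf_gaussianReal_eq_integral μ hv, add_sub_cancel]
  rw [heq]
  exact (intervalIntegral.integral_hasDerivAt_right (hcont.intervalIntegrable _ _)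
    (hcont.stronglyMeasurableAtFilter _ _) hcont.continuousAt).const_add _

lemma stdGaussianPDF_eq (x : ℝ) : φ x = (√(2 * π))⁻¹ * exp (-(x ^ 2 / 2)) := by
  simp [gaussianPDFReal, neg_div]

lemma stdGaussianPDF_le_exp (x : ℝ) : φ x ≤ exp (-(x ^ 2 / 2)) := by
  have h : (√(2 * π))⁻¹ ≤ 1 :=
    inv_le_one_of_one_le₀ (one_le_sqrt.2 (by linarith [pi_gt_three]))
  rw [stdGaussianPDF_eq]
  exact mul_le_of_le_one_left (exp_pos _).le h

lemma abs_stdGaussianCDF_sub_le (x y : ℝ) : |Φ x - Φ y| ≤ |x - y| := by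
  have hbound (z : ℝ) : ‖φ z‖ ≤ 1 := by
    rw [norm_of_nonneg (gaussianPDFReal_nonneg _ _ _)]
    exact (stdGaussianPDF_le_exp z).trans (exp_le_one_iff.2 (by linarith [sq_nonneg z]))
  simpa using convex_univ.norm_image_sub_le_of_norm_hasDerivWithin_le
    (fun z _ => (hasDerivAt_cdf_gaussianReal 0 one_ne_zero z).hasDerivWithinAt)
    (fun z _ => hbound z) (Set.mem_univ y) (Set.mem_univ x)

lemma stdGaussian_real_abs_ge_le (x : ℝ) :
    (gaussianReal 0 1).real {y | |x| ≤ |y|} ≤ 2 / (1 + x ^ 2) := by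
  have hsq : Integrable (fun y : ℝ => y ^ 2) (gaussianReal 0 1) :=
    (memLp_id_gaussianReal 2).integrable_sq
  have hmoment : ∫ y, y ^ 2 ∂gaussianReal 0 1 = 1 := by
    simpa [variance_eq_integral aemeasurable_id'] using
      (variance_fun_id_gaussianReal (μ := 0) (v := 1))
  have hset : {y : ℝ | |x| ≤ |y|} = {y : ℝ | 1 + x ^ 2 ≤ 1 + y ^ 2} := by
    ext y
    simp [sq_le_sq]
  have hmarkov := mul_meas_ge_le_integral_of_nonneg (μ := gaussianReal 0 1)
    (ae_of_all _ fun y : ℝ => (by positivity : 0 ≤ 1 + y ^ 2))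
    ((integrable_const 1).add hsq) (1 + x ^ 2)
  rw [integral_add (integrable_const 1) hsq, hmoment] at hmarkov
  rw [hset, le_div_iff₀ (by positivity), mul_comm]
  simpa [one_add_one_eq_two] using hmarkov

lemma one_sub_stdGaussianCDF_le {x : ℝ} (hx : 0 ≤ x) : 1 - Φ x ≤ 2 / (1 + x ^ 2) := by
  refine le_trans ?_ (stdGaussian_real_abs_ge_le x)
  rw [cdf_eq_real, ← probReal_compl_eq_one_sub measurableSet_Iic, Set.compl_Iic]
  exact measureReal_mono fun y hy => abs_le_abs_of_nonneg hx (Set.mem_Ioi.1 hy).le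

lemma stdGaussianCDF_le {x : ℝ} (hx : x ≤ 0) : Φ x ≤ 2 / (1 + x ^ 2) := by
  refine le_trans ?_ (stdGaussian_real_abs_ge_le x)
  rw [cdf_eq_real]
  exact measureReal_mono fun y hy => abs_le_abs_of_nonpos hx (Set.mem_Iic.1 hy)

/-! ### Replacing a sign by a Gaussian -/

lemma abs_exp_sub_quadratic_le (x : ℝ) :
    |exp x - (1 + x + x ^ 2 / 2)| ≤ |x| ^ 3 * exp |x| := by
  have h := Complex.norm_exp_sub_sum_le_norm_mul_exp (x : ℂ) 3
  have hcast : Complex.exp x - ∑ m ∈ Finset.range 3, (x : ℂ) ^ m / m.factorial =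
      ((exp x - (1 + x + x ^ 2 / 2) : ℝ) : ℂ) := by
    simp [Finset.sum_range_succ]
  rwa [hcast, Complex.norm_real, Complex.norm_real] at h

lemma abs_sinh_sub_self_le (x : ℝ) : |sinh x - x| ≤ |x| ^ 3 * exp |x| := by
  have h₁ := abs_le.1 (abs_exp_sub_quadratic_le x)
  have h₂ := abs_le.1 (abs_neg x ▸ abs_exp_sub_quadratic_le (-x))
  rw [sinh_eq, abs_le]
  constructor <;> linarith [h₁.1, h₁.2, h₂.1, h₂.2]

lemma abs_exp_neg_mul_sinh_sub_self_le {t : ℝ} (ht : 0 ≤ t) (x : ℝ) :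
    |exp (-t) * sinh x - x| ≤ |x| ^ 3 * exp |x| + t * |x| := by
  have hexp : exp (-t) ≤ 1 := exp_le_one_iff.2 (by linarith)
  have hexp' : 1 - exp (-t) ≤ t := by linarith [add_one_le_exp (-t)]
  calc |exp (-t) * sinh x - x| = |exp (-t) * (sinh x - x) - (1 - exp (-t)) * x| := by
        congr 1; ring
    _ ≤ |exp (-t) * (sinh x - x)| + |(1 - exp (-t)) * x| := abs_sub _ _
    _ = exp (-t) * |sinh x - x| + (1 - exp (-t)) * |x| := by
        rw [abs_mul, abs_mul, abs_exp, abs_of_nonneg (sub_nonneg.2 hexp)]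
    _ ≤ 1 * (|x| ^ 3 * exp |x|) + t * |x| := by gcongr; exact abs_sinh_sub_self_le x
    _ = _ := by ring

lemma exp_sub_one_le_mul_exp (x : ℝ) : exp x - 1 ≤ x * exp x := by
  have h := mul_le_mul_of_nonneg_left (add_one_le_exp (-x)) (exp_pos x).le
  rw [← exp_add, add_neg_cancel, exp_zero] at h
  linarith

lemma one_sub_two_mul_le_inv_sqrt_pow_three {u : ℝ} (hu : 0 ≤ u) :
    1 - 2 * u ≤ (√(1 + u) ^ 3)⁻¹ := by
  have hle : √(1 + u) ^ 3 ≤ (1 + u) ^ 2 := by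
    calc √(1 + u) ^ 3 ≤ √(1 + u) ^ 4 :=
          pow_le_pow_right₀ (one_le_sqrt.2 (by linarith)) (by norm_num)
      _ = (√(1 + u) ^ 2) ^ 2 := by ring
      _ = (1 + u) ^ 2 := by rw [sq_sqrt (by positivity)]
  refine le_trans ?_ (inv_anti₀ (by positivity) hle)
  rw [← one_div, le_div_iff₀ (by positivity)]
  nlinarith [pow_nonneg hu 3]

lemma abs_exp_div_sqrt_pow_three_sub_one_le {a u : ℝ} (ha : 0 ≤ a) (hu : 0 ≤ u) :
    |exp a / √(1 + u) ^ 3 - 1| ≤ (a + 2 * u) * exp a := by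
  have hexp : 1 ≤ exp a := one_le_exp ha
  have hw : 1 ≤ √(1 + u) ^ 3 := one_le_pow₀ (one_le_sqrt.2 (by linarith))
  have hlower : 1 - 2 * u ≤ exp a / √(1 + u) ^ 3 :=
    (one_sub_two_mul_le_inv_sqrt_pow_three hu).trans
      (by rw [← one_div]; gcongr)
  have hupper : exp a / √(1 + u) ^ 3 ≤ exp a := div_le_self (exp_pos a).le hw
  rw [abs_le]
  constructor <;> nlinarith [exp_sub_one_le_mul_exp a, mul_nonneg ha (exp_pos a).le,
    mul_nonneg hu (sub_nonneg.2 hexp)]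

lemma abs_exp_div_mul_sub_exp_neg_mul_sinh_le {a u : ℝ} (ha : 0 ≤ a) (hu : 0 ≤ u) (x : ℝ) :
    |exp a / √(1 + u) ^ 3 * x - exp (-(u / 2)) * sinh x| ≤
      ((a + 2 * u) * exp a + u / 2) * |x| + |x| ^ 3 * exp |x| := by
  calc |exp a / √(1 + u) ^ 3 * x - exp (-(u / 2)) * sinh x|
      = |(exp a / √(1 + u) ^ 3 - 1) * x - (exp (-(u / 2)) * sinh x - x)| := by congr 1; ring
    _ ≤ |exp a / √(1 + u) ^ 3 - 1| * |x| + |exp (-(u / 2)) * sinh x - x| := by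
        rw [← abs_mul]
        exact abs_sub _ _
    _ ≤ (a + 2 * u) * exp a * |x| + (|x| ^ 3 * exp |x| + u / 2 * |x|) := by
        gcongr
        · exact abs_exp_div_sqrt_pow_three_sub_one_le ha hu
        · exact abs_exp_neg_mul_sinh_sub_self_le (by positivity) x
    _ = ((a + 2 * u) * exp a + u / 2) * |x| + |x| ^ 3 * exp |x| := by ring

/-- For `ε = ±1` a fair sign and `Z` standard normal, `E Φ(y + d ε) - E Φ(y + d Z)`, the error made
by replacing one coin flip of size `d` with a Gaussian increment of the same variance. -/
noncomputable def signGaussianGap (y d : ℝ) : ℝ :=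
  (Φ (y + d) + Φ (y - d)) / 2 - Φ (y / √(1 + d ^ 2))

lemma hasDerivAt_div_sqrt_one_add_sq (y d : ℝ) :
    HasDerivAt (fun d => y / √(1 + d ^ 2)) (-(y * d / √(1 + d ^ 2) ^ 3)) d := by
  have hw : 0 < √(1 + d ^ 2) := by positivity
  have hsqrt : HasDerivAt (fun d => √(1 + d ^ 2)) (d / √(1 + d ^ 2)) d := by
    refine (((hasDerivAt_pow 2 d).const_add 1).sqrt (by positivity)).congr_deriv ?_
    simp only [Nat.cast_ofNat, Nat.add_one_sub_one, pow_one]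
    field_simp
  refine ((hasDerivAt_const d y).div hsqrt hw.ne').congr_deriv ?_
  field_simp
  ring

lemma hasDerivAt_signGaussianGap (y d : ℝ) :
    HasDerivAt (signGaussianGap y)
      ((φ (y + d) - φ (y - d)) / 2 + φ (y / √(1 + d ^ 2)) * (y * d / √(1 + d ^ 2) ^ 3)) d := by
  have hΦ := hasDerivAt_cdf_gaussianReal 0 one_ne_zero
  have hadd := (hΦ (y + d)).comp d ((hasDerivAt_id d).const_add y)
  have hsub := (hΦ (y - d)).comp d ((hasDerivAt_id d).const_sub y)
  have hdiv := (hΦ (y / √(1 + d ^ 2))).comp d (hasDerivAt_div_sqrt_one_add_sq y d)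
  refine (((hadd.add hsub).div_const 2).sub hdiv).congr_deriv ?_
  ring

lemma signGaussianGap_deriv_eq (y d : ℝ) :
    (φ (y + d) - φ (y - d)) / 2 + φ (y / √(1 + d ^ 2)) * (y * d / √(1 + d ^ 2) ^ 3) =
      φ y * (exp (y ^ 2 * d ^ 2 / (2 * (1 + d ^ 2))) / √(1 + d ^ 2) ^ 3 * (y * d) -
        exp (-(d ^ 2 / 2)) * sinh (y * d)) := by
  have hadd : φ (y + d) = φ y * (exp (-(d ^ 2 / 2)) * exp (-(y * d))) := by
    rw [stdGaussianPDF_eq, stdGaussianPDF_eq, mul_assoc, ← exp_add, ← exp_add]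
    ring_nf
  have hsub : φ (y - d) = φ y * (exp (-(d ^ 2 / 2)) * exp (y * d)) := by
    rw [stdGaussianPDF_eq, stdGaussianPDF_eq, mul_assoc, ← exp_add, ← exp_add]
    ring_nf
  have hdiv : φ (y / √(1 + d ^ 2)) = φ y * exp (y ^ 2 * d ^ 2 / (2 * (1 + d ^ 2))) := by
    rw [stdGaussianPDF_eq, stdGaussianPDF_eq, mul_assoc, ← exp_add, div_pow,
      sq_sqrt (by positivity)]
    congr 2
    field_simp
    ring
  rw [hadd, hsub, hdiv, sinh_eq]
  ring

lemma abs_signGaussianGap_deriv_factor_le (y : ℝ) {d : ℝ} (hd : 0 ≤ d) (hd₁ : d ≤ 1) :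
    |exp (y ^ 2 * d ^ 2 / (2 * (1 + d ^ 2))) / √(1 + d ^ 2) ^ 3 * (y * d) -
        exp (-(d ^ 2 / 2)) * sinh (y * d)| ≤
      3 * (1 + y ^ 2) ^ 2 * exp (1 + y ^ 2 / 4) * d ^ 3 := by
  set a := y ^ 2 * d ^ 2 / (2 * (1 + d ^ 2)) with ha
  set M := exp (1 + y ^ 2 / 4)
  have ha_sq : a ≤ (|y| * d) ^ 2 := by
    rw [mul_pow, sq_abs]
    exact div_le_self (by positivity) (by linarith [sq_nonneg d])
  have ha_exp : exp a ≤ M := by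
    refine exp_le_exp.2 (le_add_of_nonneg_of_le zero_le_one ?_)
    rw [ha, div_le_iff₀ (by positivity)]
    nlinarith [mul_nonneg (sq_nonneg y) (sub_nonneg.2 (pow_le_one₀ hd hd₁ : d ^ 2 ≤ 1))]
  have hyd_exp : exp (|y| * d) ≤ M :=
    exp_le_exp.2 (by nlinarith [sq_abs y, sq_nonneg (|y| / 2 - 1), abs_nonneg y])
  have hM : 1 ≤ M := one_le_exp (by positivity)
  have hy : |y| ≤ 1 + y ^ 2 := by nlinarith [sq_abs y, sq_nonneg (|y| - 1), abs_nonneg y]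
  refine (abs_exp_div_mul_sub_exp_neg_mul_sinh_le (by positivity) (sq_nonneg d) _).trans ?_
  rw [abs_mul, abs_of_nonneg hd]
  calc ((a + 2 * d ^ 2) * exp a + d ^ 2 / 2) * (|y| * d) + (|y| * d) ^ 3 * exp (|y| * d)
      ≤ (((|y| * d) ^ 2 + 2 * d ^ 2) * M + d ^ 2 * M) * (|y| * d) + (|y| * d) ^ 3 * M := by
        gcongr
        nlinarith [sq_nonneg d]
    _ = (2 * |y| ^ 2 + 3) * |y| * M * d ^ 3 := by ring
    _ ≤ 3 * (1 + y ^ 2) * (1 + y ^ 2) * M * d ^ 3 := by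
        rw [sq_abs]
        gcongr
        linarith [sq_nonneg y]
    _ = 3 * (1 + y ^ 2) ^ 2 * M * d ^ 3 := by ring

lemma one_add_sq_pow_three_le_exp (y : ℝ) : (1 + y ^ 2) ^ 3 ≤ 384 * exp (1 + y ^ 2 / 4) := by
  have h := pow_div_factorial_le_exp (1 + y ^ 2 / 4) (by positivity) 3
  have hmono : (1 + y ^ 2) ^ 3 ≤ (4 * (1 + y ^ 2 / 4)) ^ 3 := by
    gcongr
    linarith
  norm_num [Nat.factorial, mul_pow] at h hmono
  linarith

lemma stdGaussianPDF_mul_le (y : ℝ) :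
    φ y * (3 * (1 + y ^ 2) ^ 2 * exp (1 + y ^ 2 / 4)) ≤ 1152 * exp 2 / (1 + y ^ 2) := by
  rw [le_div_iff₀ (by positivity)]
  have hexp : exp (-(y ^ 2 / 2)) * (exp (1 + y ^ 2 / 4) * exp (1 + y ^ 2 / 4)) = exp 2 := by
    rw [← exp_add, ← exp_add]
    ring_nf
  calc φ y * (3 * (1 + y ^ 2) ^ 2 * exp (1 + y ^ 2 / 4)) * (1 + y ^ 2)
      = 3 * φ y * exp (1 + y ^ 2 / 4) * (1 + y ^ 2) ^ 3 := by ring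
    _ ≤ 3 * exp (-(y ^ 2 / 2)) * exp (1 + y ^ 2 / 4) * (384 * exp (1 + y ^ 2 / 4)) := by
        gcongr
        · exact stdGaussianPDF_le_exp y
        · exact one_add_sq_pow_three_le_exp y
    _ = 1152 * (exp (-(y ^ 2 / 2)) * (exp (1 + y ^ 2 / 4) * exp (1 + y ^ 2 / 4))) := by ring
    _ = 1152 * exp 2 := by rw [hexp]

lemma abs_signGaussianGap_le (y : ℝ) {d : ℝ} (hd : 0 ≤ d) (hd₁ : d ≤ 1) :
    |signGaussianGap y d| ≤ 1152 * exp 2 / (1 + y ^ 2) * d ^ 4 := by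
  have hderiv : ∀ z ∈ Set.Icc 0 d,
      ‖(φ (y + z) - φ (y - z)) / 2 + φ (y / √(1 + z ^ 2)) * (y * z / √(1 + z ^ 2) ^ 3)‖ ≤
        1152 * exp 2 / (1 + y ^ 2) * d ^ 3 := by
    rintro z ⟨hz₀, hzd⟩
    rw [signGaussianGap_deriv_eq, norm_mul, norm_of_nonneg (gaussianPDFReal_nonneg _ _ _)]
    calc φ y * _ ≤ φ y * (3 * (1 + y ^ 2) ^ 2 * exp (1 + y ^ 2 / 4) * z ^ 3) :=
          mul_le_mul_of_nonneg_left
            (abs_signGaussianGap_deriv_factor_le y hz₀ (hzd.trans hd₁))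
            (gaussianPDFReal_nonneg _ _ _)
      _ = φ y * (3 * (1 + y ^ 2) ^ 2 * exp (1 + y ^ 2 / 4)) * z ^ 3 := by ring
      _ ≤ 1152 * exp 2 / (1 + y ^ 2) * d ^ 3 := by
          gcongr
          exact stdGaussianPDF_mul_le y
  have h := (convex_Icc 0 d).norm_image_sub_le_of_norm_hasDerivWithin_le
    (fun z _ => (hasDerivAt_signGaussianGap y z).hasDerivWithinAt) hderiv
    (Set.left_mem_Icc.2 hd) (Set.right_mem_Icc.2 hd)
  have hzero : signGaussianGap y 0 = 0 := by simp [signGaussianGap]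
  rw [hzero, sub_zero, sub_zero, norm_eq_abs, norm_of_nonneg hd] at h
  linarith

/-! ### Averages along the simple random walk -/

open Finset.HasAntidiagonal (antidiagonal)

/-- Averaging over one fair `±1` step, so that `(signAvg ^ n) f x = E f (x + Sₙ)` for the simple
random walk `Sₙ`; bundled as a linear operator in order to telescope its powers. -/
noncomputable def signAvg : Module.End ℝ (ℝ → ℝ) where
  toFun f x := (f (x + 1) + f (x - 1)) / 2
  map_add' f g := by
    ext x
    simp only [Pi.add_apply]
    ring
  map_smul' a f := by
    ext x
    simp only [Pi.smul_apply, smul_eq_mul, RingHom.id_apply]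
    ring

lemma signAvg_apply (f : ℝ → ℝ) (x : ℝ) : signAvg f x = (f (x + 1) + f (x - 1)) / 2 := rfl

lemma signAvg_pow_succ_apply (n : ℕ) (f : ℝ → ℝ) (x : ℝ) :
    (signAvg ^ (n + 1)) f x = ((signAvg ^ n) f (x + 1) + (signAvg ^ n) f (x - 1)) / 2 := by
  rw [pow_succ', Module.End.mul_apply, signAvg_apply]

lemma abs_signAvg_pow_le {f : ℝ → ℝ} {M : ℝ} (hf : ∀ x, |f x| ≤ M) (n : ℕ) (x : ℝ) :
    |(signAvg ^ n) f x| ≤ M := by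
  induction n generalizing x with
  | zero => exact hf x
  | succ n ih =>
    rw [signAvg_pow_succ_apply, abs_div, abs_two, div_le_iff₀ two_pos, mul_two]
    exact (abs_add_le _ _).trans (add_le_add (ih _) (ih _))

lemma signAvg_pow_apply (n : ℕ) (f : ℝ → ℝ) (x : ℝ) :
    (signAvg ^ n) f x =
      ∑ ij ∈ antidiagonal n, (n.choose ij.1 : ℝ) * (f (x + ij.1 - ij.2) / 2 ^ n) := by
  induction n generalizing x with
  | zero => simp
  | succ n ih =>
    rw [signAvg_pow_succ_apply, ih, ih,
      Finset.sum_antidiagonal_choose_succ_mul (fun i j => f (x + i - j) / 2 ^ (n + 1)) n,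
      add_div, Finset.sum_div, Finset.sum_div, add_comm]
    congr 1 <;> refine Finset.sum_congr rfl fun ij hij => ?_
    · rw [show x - 1 + (ij.1 : ℝ) - ij.2 = x + ij.1 - ((ij.2 + 1 : ℕ) : ℝ) by push_cast; ring]
      ring
    · rw [Nat.choose_symm_of_eq_add (Finset.HasAntidiagonal.mem_antidiagonal.1 hij).symm,
        show x + 1 + (ij.1 : ℝ) - ij.2 = x + ((ij.1 + 1 : ℕ) : ℝ) - ij.2 by push_cast; ring]
      ring

lemma centralBinom_sq_mul_le (m : ℕ) : m.centralBinom ^ 2 * (2 * m + 1) ≤ 4 ^ (2 * m) := by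
  induction m with
  | zero => simp
  | succ m ih =>
    refine le_of_mul_le_mul_left ?_ (pow_pos m.succ_pos 2)
    calc (m + 1) ^ 2 * ((m + 1).centralBinom ^ 2 * (2 * (m + 1) + 1))
        = ((m + 1) * (m + 1).centralBinom) ^ 2 * (2 * m + 3) := by ring
      _ = 4 * (2 * m + 1) * (2 * m + 3) * (m.centralBinom ^ 2 * (2 * m + 1)) := by
        rw [Nat.succ_mul_centralBinom_succ]
        ring
      _ ≤ 16 * (m + 1) ^ 2 * 4 ^ (2 * m) := Nat.mul_le_mul (by nlinarith) ih
      _ = (m + 1) ^ 2 * 4 ^ (2 * (m + 1)) := by ring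

lemma choose_sq_mul_succ_le (n j : ℕ) : n.choose j ^ 2 * (n + 1) ≤ 4 * 4 ^ n := by
  rcases Nat.even_or_odd' n with ⟨m, rfl | rfl⟩
  · calc (2 * m).choose j ^ 2 * (2 * m + 1) ≤ m.centralBinom ^ 2 * (2 * m + 1) := by
          gcongr
          exact Nat.choose_le_centralBinom _ _
      _ ≤ 4 ^ (2 * m) := centralBinom_sq_mul_le m
      _ ≤ 4 * 4 ^ (2 * m) := by omega
  · have hchoose : (2 * m + 1).choose j ≤ (m + 1).centralBinom :=
      calc (2 * m + 1).choose j ≤ (2 * (m + 1)).choose (j + 1) := by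
            rw [mul_add_one, Nat.choose_succ_succ]
            omega
        _ ≤ (m + 1).centralBinom := Nat.choose_le_centralBinom _ _
    calc (2 * m + 1).choose j ^ 2 * (2 * m + 1 + 1)
        ≤ (m + 1).centralBinom ^ 2 * (2 * (m + 1) + 1) := by
          gcongr
          omega
      _ ≤ 4 ^ (2 * (m + 1)) := centralBinom_sq_mul_le (m + 1)
      _ = 4 * 4 ^ (2 * m + 1) := by ring

lemma choose_div_two_pow_le (n j : ℕ) : (n.choose j : ℝ) / 2 ^ n ≤ 2 / √(n + 1) := by
  rw [div_le_div_iff₀ (by positivity) (by positivity)]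
  refine le_of_sq_le_sq ?_ (by positivity)
  rw [mul_pow, sq_sqrt (by positivity), mul_pow, pow_right_comm]
  exact_mod_cast choose_sq_mul_succ_le n j

/- The walk lives on points two apart, so the increments `G (y + 1) - G (y - 1)` telescope. -/
lemma abs_signAvg_pow_le_of_abs_le_sub {h G : ℝ → ℝ} {B : ℝ} (hG : ∀ x, |G x| ≤ B)
    (hh : ∀ x, |h x| ≤ G (x + 1) - G (x - 1)) (n : ℕ) (x : ℝ) :
    |(signAvg ^ n) h x| ≤ 4 * B / √(n + 1) := by
  have hterm (ij : ℕ × ℕ) :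
      |(n.choose ij.1 : ℝ) * (h (x + ij.1 - ij.2) / 2 ^ n)| ≤
        2 / √(n + 1) * (G (x + ij.1 - ij.2 + 1) - G (x + ij.1 - ij.2 - 1)) := by
    rw [mul_div_left_comm, mul_comm, abs_mul, abs_of_nonneg (by positivity)]
    exact mul_le_mul (choose_div_two_pow_le n _) (hh _) (abs_nonneg _) (by positivity)
  have htelescope : ∑ ij ∈ antidiagonal n,
      (G (x + ij.1 - ij.2 + 1) - G (x + ij.1 - ij.2 - 1)) = G (x + n + 1) - G (x - n - 1) := by
    rw [Finset.Nat.sum_antidiagonal_eq_sum_range_succ_mk]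
    have hsum := Finset.sum_range_sub (fun i : ℕ => G (x + 2 * (i : ℝ) - n - 1)) (n + 1)
    convert hsum using 1
    · refine Finset.sum_congr rfl fun i hi => ?_
      rw [Nat.cast_sub (Finset.mem_range_succ_iff.1 hi)]
      push_cast
      ring_nf
    · push_cast
      ring_nf
  rw [signAvg_pow_apply]
  calc |∑ ij ∈ antidiagonal n, (n.choose ij.1 : ℝ) * (h (x + ij.1 - ij.2) / 2 ^ n)|
      ≤ 2 / √(n + 1) * (G (x + n + 1) - G (x - n - 1)) := by
        rw [← htelescope, Finset.mul_sum]
        exact (Finset.abs_sum_le_sum_abs _ _).trans (Finset.sum_le_sum fun ij _ => hterm ij)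
    _ ≤ 2 / √(n + 1) * (B + B) := by
        gcongr
        linarith [le_of_abs_le (hG (x + n + 1)), neg_le_of_abs_le (hG (x - n - 1))]
    _ = 4 * B / √(n + 1) := by ring

lemma two_thirds_mul_div_le_arctan_sub {d : ℝ} (hd : 0 ≤ d) (hd₁ : d ≤ 1) (y : ℝ) :
    2 / 3 * d / (1 + y ^ 2) ≤ arctan (y + d) - arctan (y - d) := by
  have hderiv : ∀ v ∈ interior (Set.Icc (y - d) (y + d)), 1 / 3 / (1 + y ^ 2) ≤ deriv arctan v := by
    intro v hv
    obtain ⟨hv₁, hv₂⟩ := interior_subset hv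
    have hvy : (v - y) ^ 2 ≤ 1 := by nlinarith
    rw [Real.deriv_arctan, div_le_div_iff₀ (by positivity) (by positivity)]
    nlinarith [sq_nonneg (v - 2 * y)]
  have h := (convex_Icc _ _).mul_sub_le_image_sub_of_le_deriv continuous_arctan.continuousOn
    differentiable_arctan.differentiableOn hderiv (y - d) ⟨le_rfl, by linarith⟩ (y + d)
    ⟨by linarith, le_rfl⟩ (by linarith)
  exact le_of_eq_of_le (by ring) h

lemma abs_signAvg_pow_le_of_abs_le_cauchy {h : ℝ → ℝ} {M s : ℝ} (hs : 1 ≤ s)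
    (hh : ∀ x, |h x| ≤ M / (1 + (x / s) ^ 2)) (n : ℕ) (x : ℝ) :
    |(signAvg ^ n) h x| ≤ 10 * M * s / √(n + 1) := by
  have hs₀ : 0 < s := by linarith
  have hM : 0 ≤ M := (abs_nonneg (h 0)).trans (by simpa using hh 0)
  have hG (x : ℝ) : |3 / 2 * M * s * arctan (x / s)| ≤ 3 / 2 * M * s * (π / 2) := by
    rw [abs_mul, abs_of_nonneg (by positivity)]
    gcongr
    exact abs_le.2 ⟨(neg_pi_div_two_lt_arctan _).le, (arctan_lt_pi_div_two _).le⟩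
  have hincr (x : ℝ) : |h x| ≤
      3 / 2 * M * s * arctan ((x + 1) / s) - 3 / 2 * M * s * arctan ((x - 1) / s) := by
    have harctan := two_thirds_mul_div_le_arctan_sub (d := 1 / s) (by positivity)
      ((div_le_one hs₀).2 hs) (x / s)
    rw [← mul_sub, add_div, sub_div]
    calc |h x| ≤ M / (1 + (x / s) ^ 2) := hh x
      _ = 3 / 2 * M * s * (2 / 3 * (1 / s) / (1 + (x / s) ^ 2)) := by field_simp
      _ ≤ _ := by gcongr
  refine (abs_signAvg_pow_le_of_abs_le_sub hG hincr n x).trans ?_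
  refine div_le_div_of_nonneg_right ?_ (sqrt_nonneg _)
  nlinarith [pi_lt_d2, mul_nonneg hM hs₀.le]

lemma abs_signAvg_pow_le_cauchy_uniform {h : ℝ → ℝ} {M s : ℝ} (hs : 1 ≤ s)
    (hh : ∀ x, |h x| ≤ M / (1 + (x / s) ^ 2)) (n : ℕ) (x : ℝ) :
    |(signAvg ^ n) h x| ≤ 15 * M * s / √(n + 1 + s ^ 2) := by
  have hM : 0 ≤ M := (abs_nonneg (h 0)).trans (by simpa using hh 0)
  have hbound : ∀ r > 0, n + 1 + s ^ 2 ≤ 2 * r ^ 2 →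
      10 * M * s / r ≤ 15 * M * s / √(n + 1 + s ^ 2) := by
    intro r hr hle
    rw [div_le_div_iff₀ (by positivity) (by positivity)]
    have : √(n + 1 + s ^ 2) ≤ 3 / 2 * r := sqrt_le_iff.2 ⟨by positivity, by nlinarith⟩
    nlinarith [mul_le_mul_of_nonneg_left this (by positivity : 0 ≤ M * s)]
  rcases le_total (s ^ 2) (n + 1) with hle | hle
  · refine (abs_signAvg_pow_le_of_abs_le_cauchy hs hh n x).trans (hbound _ (by positivity) ?_)
    rw [sq_sqrt (by positivity)]
    linarith
  · refine (abs_signAvg_pow_le (M := M) (fun y => (hh y).trans ?_) n x).trans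
      (le_trans ?_ (hbound s (by positivity) (by linarith)))
    · exact div_le_self hM (by linarith [sq_nonneg (y / s)])
    · rw [mul_div_cancel_right₀ _ (by positivity)]
      linarith

/-- The distribution function of a centred Gaussian of variance `t > 0`. -/
noncomputable def gaussianProfile (t x : ℝ) : ℝ := Φ (x / √t)

lemma signAvg_gaussianProfile_sub {t : ℝ} (ht : 0 < t) (x : ℝ) :
    signAvg (gaussianProfile t) x - gaussianProfile (t + 1) x =
      signGaussianGap (x / √t) (1 / √t) := by
  have hsqrt : √(t + 1) = √t * √(1 + (1 / √t) ^ 2) := by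
    rw [← sqrt_mul ht.le, div_pow, sq_sqrt ht.le]
    congr 1
    field_simp
  simp only [signAvg_apply, gaussianProfile, signGaussianGap]
  rw [hsqrt, add_div x, sub_div, div_div]

lemma abs_signAvg_gaussianProfile_sub_le {t : ℝ} (ht : 1 ≤ t) (x : ℝ) :
    |signAvg (gaussianProfile t) x - gaussianProfile (t + 1) x| ≤
      1152 * exp 2 / t ^ 2 / (1 + (x / √t) ^ 2) := by
  have ht₀ : 0 < t := by linarith
  rw [signAvg_gaussianProfile_sub ht₀]
  refine (abs_signGaussianGap_le _ (by positivity)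
    ((div_le_one (sqrt_pos.2 ht₀)).2 (one_le_sqrt.2 ht))).trans_eq ?_
  rw [div_pow 1, show √t ^ 4 = (√t ^ 2) ^ 2 by ring, sq_sqrt ht₀.le]
  field_simp

lemma summable_sqrt_div_sq : Summable fun i : ℕ => √((i : ℝ) + 1) / ((i : ℝ) + 1) ^ 2 := by
  have h := (summable_nat_add_iff 1).2
    (summable_one_div_nat_rpow.2 (by norm_num : (1 : ℝ) < 3 / 2))
  refine h.congr fun i => ?_
  have hi : (0 : ℝ) < (i : ℝ) + 1 := by positivity
  rw [sqrt_eq_rpow, ← rpow_natCast, ← rpow_sub hi, one_div, Nat.cast_succ, ← rpow_neg hi.le]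
  norm_num

lemma pow_apply_sub_eq_sum {R V : Type*} [Ring R] [AddCommGroup V] [Module R V]
    (T : Module.End R V) (f : V) (g : ℕ → V) (n : ℕ) :
    (T ^ n) f - g n =
      (T ^ n) (f - g 0) + ∑ i ∈ Finset.range n, (T ^ (n - 1 - i)) (T (g i) - g (i + 1)) := by
  have hterm : ∀ i ∈ Finset.range n, (T ^ (n - 1 - i)) (T (g i) - g (i + 1)) =
      (T ^ (n - i)) (g i) - (T ^ (n - (i + 1))) (g (i + 1)) := by
    intro i hi
    have hi := Finset.mem_range.1 hi
    rw [map_sub, ← Module.End.mul_apply, ← pow_succ, show n - 1 - i + 1 = n - i by omega,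
      show n - 1 - i = n - (i + 1) by omega]
  rw [Finset.sum_congr rfl hterm, Finset.sum_range_sub' fun i => (T ^ (n - i)) (g i)]
  simp

lemma abs_signAvg_pow_gaussianProfile_le {n i : ℕ} (hi : i < n) (x : ℝ) :
    |(signAvg ^ (n - 1 - i))
        (signAvg (gaussianProfile (i + 1)) - gaussianProfile (i + 1 + 1)) x| ≤
      15 * (1152 * exp 2) / √(n + 1) * (√(i + 1) / (i + 1) ^ 2) := by
  have hi₁ : (1 : ℝ) ≤ i + 1 := le_add_of_nonneg_left i.cast_nonneg
  have hn : ((n - 1 - i : ℕ) : ℝ) + 1 + √(i + 1) ^ 2 = n + 1 := by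
    rw [sq_sqrt (by positivity)]
    exact_mod_cast (by omega : n - 1 - i + 1 + (i + 1) = n + 1)
  have h := abs_signAvg_pow_le_cauchy_uniform (one_le_sqrt.2 hi₁)
    (abs_signAvg_gaussianProfile_sub_le hi₁) (n - 1 - i) x
  rw [hn] at h
  exact h.trans_eq (by ring)

/- Lindeberg's replacement scheme, with the comparison Gaussian started at time `1` so that every
swap acts on a smooth profile; this is why `√(n + 1)` rather than `√n` appears. -/
theorem exists_abs_signAvg_pow_sub_stdGaussianCDF_le :
    ∃ C > 0, ∀ (f : ℝ → ℝ) (M : ℝ), (∀ x, |f x - Φ x| ≤ M / (1 + x ^ 2)) → ∀ (n : ℕ) (x : ℝ),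
      |(signAvg ^ n) f x - Φ (x / √(n + 1))| ≤ (15 * M + C) / √(n + 1) := by
  set S := ∑' i : ℕ, √((i : ℝ) + 1) / ((i : ℝ) + 1) ^ 2
  have hS : 0 < S := summable_sqrt_div_sq.tsum_pos (fun i => by positivity) 0 (by norm_num)
  refine ⟨15 * (1152 * exp 2) * S, by positivity, fun f M hf n x => ?_⟩
  have hM : 0 ≤ M := (abs_nonneg _).trans (by simpa using hf 0)
  have hinit : |(signAvg ^ n) (f - gaussianProfile 1) x| ≤ 15 * M / √(n + 1) := by
    refine (abs_signAvg_pow_le_cauchy_uniform le_rfl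
      (fun y => by simpa [gaussianProfile] using hf y) n x).trans ?_
    rw [mul_one]
    gcongr _ / √?_
    norm_num
  have hswaps : |∑ i ∈ Finset.range n, (signAvg ^ (n - 1 - i))
      (signAvg (gaussianProfile (i + 1)) - gaussianProfile (i + 1 + 1)) x| ≤
        15 * (1152 * exp 2) / √(n + 1) * S := by
    refine (Finset.abs_sum_le_sum_abs _ _).trans ((Finset.sum_le_sum fun i hi =>
      abs_signAvg_pow_gaussianProfile_le (Finset.mem_range.1 hi) x).trans ?_)
    rw [← Finset.mul_sum]
    gcongr
    exact summable_sqrt_div_sq.sum_le_tsum _ fun i _ => by positivity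
  have hdecomp := congrFun
    (pow_apply_sub_eq_sum signAvg f (fun i : ℕ => gaussianProfile (i + 1)) n) x
  simp only [Pi.sub_apply, Pi.add_apply, Finset.sum_apply, Nat.cast_zero, zero_add,
    Nat.cast_succ] at hdecomp
  rw [show Φ (x / √(n + 1)) = gaussianProfile (n + 1) x from rfl, hdecomp, add_div]
  exact (abs_add_le _ _).trans (add_le_add hinit (hswaps.trans_eq (by ring)))

/-! ### Poisson thinning -/

lemma charFun_map_indicator_one {Ω : Type*} [MeasurableSpace Ω] {ν : Measure Ω}
    [IsProbabilityMeasure ν] {A : Set Ω} (hA : MeasurableSet A) (t : ℝ) :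
    charFun (ν.map (A.indicator fun _ => (1 : ℝ))) t =
      1 + ν.real A * (Complex.exp (t * Complex.I) - 1) := by
  have hexp (ω : Ω) :
      Complex.exp (t * (A.indicator (fun _ => (1 : ℝ)) ω : ℝ) * Complex.I) =
        1 + A.indicator (fun _ => Complex.exp (t * Complex.I) - 1) ω := by
    by_cases hω : ω ∈ A <;> simp [hω]
  rw [charFun_apply_real, integral_map (measurable_const.indicator hA).aemeasurable (by fun_prop),
    integral_congr_ae (ae_of_all _ hexp),
    integral_add (integrable_const _) ((integrable_const _).indicator hA),
    integral_indicator_const _ hA]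
  simp

lemma integral_pow_poissonMeasure (r : NNReal) (z : ℂ) :
    ∫ n, z ^ n ∂poissonMeasure r = Complex.exp (r * (z - 1)) := by
  have hsum := (NormedSpace.expSeries_div_hasSum_exp ((r : ℂ) * z)).mul_left (Complex.exp (-r))
  rw [← Complex.exp_eq_exp_ℂ, ← Complex.exp_add] at hsum
  rw [integral_poissonMeasure, mul_sub_one, sub_eq_neg_add, ← hsum.tsum_eq]
  refine tsum_congr fun n => ?_
  rw [Complex.real_smul, mul_pow]
  push_cast
  ring

section Thinning

variable {Ω : Type*} [MeasurableSpace Ω] {ν : Measure Ω} {A : ℕ → Set Ω}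

lemma measurable_sum_range_indicator (hA : ∀ i, MeasurableSet (A i)) :
    Measurable fun ω : ℕ × Ω => ∑ i ∈ Finset.range ω.1, (A i).indicator (fun _ => 1) ω.2 :=
  measurable_from_prod_countable_right fun n =>
    Finset.measurable_sum (Finset.range n) fun i _ => measurable_const.indicator (hA i)

lemma charFun_map_sum_range_indicator [IsProbabilityMeasure ν] {P : NNReal}
    (hA : ∀ i, MeasurableSet (A i)) (hindep : iIndepSet A ν) (hP : ∀ i, ν (A i) = P)
    (n : ℕ) (t : ℝ) :
    charFun (ν.map (∑ i ∈ Finset.range n, (A i).indicator fun _ => (1 : ℝ))) t =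
      (1 + P * (Complex.exp (t * Complex.I) - 1)) ^ n := by
  have hmeas (i : ℕ) : AEMeasurable ((A i).indicator fun _ => (1 : ℝ)) ν :=
    (measurable_const.indicator (hA i)).aemeasurable
  rw [(hindep.iIndepFun_indicator.restrict _).charFun_map_finsetSum_eq_prod fun i _ => hmeas i,
    Finset.prod_apply]
  simp only [charFun_map_indicator_one (hA _), measureReal_def, hP, ENNReal.coe_toReal,
    Finset.prod_const, Finset.card_range]

theorem hasLaw_poisson_thinning [IsProbabilityMeasure ν] {P : NNReal}
    (hA : ∀ i, MeasurableSet (A i)) (hindep : iIndepSet A ν) (hP : ∀ i, ν (A i) = P)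
    (r : NNReal) :
    HasLaw (fun ω : ℕ × Ω => ∑ i ∈ Finset.range ω.1, (A i).indicator (fun _ => 1) ω.2)
      (poissonMeasure (r * P)) ((poissonMeasure r).prod ν) := by
  have hmeas := measurable_sum_range_indicator hA
  refine ⟨hmeas.aemeasurable, ?_⟩
  apply (MeasurableEmbedding.natCast (α := ℝ)).map_injective
  apply Measure.ext_of_charFun
  ext t
  have hcast : Measurable (Nat.cast : ℕ → ℝ) := .of_discrete
  have hexp : Continuous fun x : ℝ => Complex.exp (t * x * Complex.I) := by fun_prop
  have hinner (n : ℕ) :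
      ∫ ω, Complex.exp (t * ((∑ i ∈ Finset.range n, (A i).indicator (fun _ => 1) ω : ℕ) : ℝ) *
        Complex.I) ∂ν = (1 + P * (Complex.exp (t * Complex.I) - 1)) ^ n := by
    rw [← charFun_map_sum_range_indicator hA hindep hP, charFun_apply_real, integral_map
      (Finset.aemeasurable_sum _ fun i _ => (measurable_const.indicator (hA i)).aemeasurable)
      hexp.aestronglyMeasurable]
    classical simp [Set.indicator_apply]
  rw [charFun_map_cast_poissonMeasure, Measure.map_map hcast hmeas, charFun_apply_real,
    integral_map (hcast.comp hmeas).aemeasurable hexp.aestronglyMeasurable, integral_prod]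
  · simp only [Function.comp_apply, hinner, integral_pow_poissonMeasure]
    push_cast
    ring_nf
  · refine .of_bound (hexp.measurable.comp (hcast.comp hmeas)).aestronglyMeasurable 1
      (ae_of_all _ fun ω => ?_)
    rw [← Complex.ofReal_mul, Complex.norm_exp_ofReal_mul_I]

end Thinning

/-! ### Words and prefixes -/

/-- The number of ones minus the number of zeros in the word `r`, i.e. the endpoint of the `±1`
walk that `r` encodes. -/
noncomputable def wordSum {k : ℕ} (r : Fin k → Bool) : ℝ := ∑ j, if r j then 1 else -1

/-- The probability that a string of i.i.d. bits with `P(1) = p` begins with the word `r`. -/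
noncomputable def wordProb (p : ℝ) {k : ℕ} (r : Fin k → Bool) : ℝ :=
  ∏ j, if r j then p else 1 - p

lemma wordSum_cons {k : ℕ} (b : Bool) (r : Fin k → Bool) :
    wordSum (Fin.cons b r : ∀ _ : Fin (k + 1), Bool) = (if b then 1 else -1) + wordSum r := by
  simp [wordSum, Fin.sum_univ_succ]

lemma sum_apply_add_wordSum (k : ℕ) (f : ℝ → ℝ) (x : ℝ) :
    ∑ r : Fin k → Bool, f (x + wordSum r) = 2 ^ k * (signAvg ^ k) f x := by
  induction k generalizing x with
  | zero => simp [wordSum]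
  | succ k ih =>
    rw [← (Fin.consEquiv fun _ : Fin (k + 1) => Bool).sum_comp, Fintype.sum_prod_type]
    simp only [Fin.consEquiv, Equiv.coe_fn_mk, wordSum_cons, Fintype.sum_bool, if_true,
      Bool.false_eq_true, if_false, ← add_assoc, ih, signAvg_pow_succ_apply, ← sub_eq_add_neg]
    ring

lemma wordProb_nonneg {p : ℝ} (hp : p ∈ Set.Icc 0 1) {k : ℕ} (r : Fin k → Bool) :
    0 ≤ wordProb p r :=
  Finset.prod_nonneg fun j _ => by split_ifs <;> linarith [hp.1, hp.2]

lemma wordProb_eq_exp {p q : ℝ} (hp : 0 < p) (hq : 0 < q) (hpq : q = 1 - p) {k : ℕ}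
    (r : Fin k → Bool) :
    wordProb p r = exp (log (p / q) / 2 * wordSum r - k * log (1 / √(p * q))) := by
  have hfactor (b : Bool) :
      (if b then p else 1 - p) =
        exp (log (p / q) / 2 * (if b then 1 else -1) - log (1 / √(p * q))) := by
    rw [log_div hp.ne' hq.ne', one_div, log_inv, log_sqrt (by positivity), log_mul hp.ne' hq.ne',
      ← hpq]
    cases b
    · rw [if_neg (by decide), if_neg (by decide), ← exp_log hq, log_exp]
      ring_nf
    · rw [if_pos rfl, if_pos rfl, ← exp_log hp, log_exp]
      ring_nf
  simp only [wordProb, wordSum, hfactor, ← exp_sum, Finset.sum_sub_distrib, Finset.mul_sum,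
    Finset.sum_const, Finset.card_univ, Fintype.card_fin, nsmul_eq_mul]

/-- The event that the `i`-th string begins with the word `r`. -/
def startsWith {k : ℕ} (r : Fin k → Bool) (i : ℕ) : Set (ℕ → ℕ → Bool) :=
  {ω | ∀ j : Fin k, ω i j = r j}

lemma measurableSet_startsWith {k : ℕ} (r : Fin k → Bool) (i : ℕ) :
    MeasurableSet (startsWith r i) := by
  rw [startsWith, Set.ofPred_forall]
  exact .iInter fun j => measurableSet_eq_fun (by fun_prop) measurable_const

lemma prefCount_eq_sum_indicator {k : ℕ} (ω : ℕ → ℕ → Bool) (n : ℕ) (r : Fin k → Bool) :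
    prefCount ω n k r = ∑ i ∈ Finset.range n, (startsWith r i).indicator (fun _ => 1) ω := by
  classical
  simp only [prefCount, Finset.card_filter, Set.indicator_apply, startsWith, Set.mem_ofPred_eq]

section IIDBits

variable {p : ℝ} {ν : Measure (ℕ → ℕ → Bool)}

lemma measure_biInter_startsWith (hp : p ∈ Set.Icc 0 1) (hν : IIDBits p ν) {k : ℕ}
    (r : Fin k → Bool) (S : Finset ℕ) :
    ν (⋂ i ∈ S, startsWith r i) = ENNReal.ofReal (wordProb p r) ^ S.card := by
  let b : ℕ × ℕ → Bool := fun s => if h : s.2 < k then r ⟨s.2, h⟩ else false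
  have hcylinder :
      ⋂ i ∈ S, startsWith r i = {ω | ∀ s ∈ S ×ˢ Finset.range k, ω s.1 s.2 = b s} := by
    ext ω
    simp only [startsWith, Set.mem_iInter, Set.mem_ofPred_eq, Finset.mem_product,
      Finset.mem_range, Prod.forall]
    refine ⟨fun h i j hij => ?_, fun h i hi j => ?_⟩
    · simpa [b, hij.2] using h i hij.1 ⟨j, hij.2⟩
    · simpa [b] using h i j ⟨hi, j.2⟩
  have hstring (i : ℕ) : ∏ j ∈ Finset.range k, ENNReal.ofReal (if b (i, j) then p else 1 - p) =
      ENNReal.ofReal (wordProb p r) := by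
    rw [wordProb, Finset.prod_range, ENNReal.ofReal_prod_of_nonneg fun j _ => by
      split_ifs <;> linarith [hp.1, hp.2]]
    simp [b]
  rw [hcylinder, hν.2, Finset.prod_product]
  simp only [hstring, Finset.prod_const]

lemma measure_startsWith (hp : p ∈ Set.Icc 0 1) (hν : IIDBits p ν) {k : ℕ} (r : Fin k → Bool)
    (i : ℕ) : ν (startsWith r i) = (wordProb p r).toNNReal := by
  simpa using! measure_biInter_startsWith hp hν r {i}

lemma iIndepSet_startsWith (hp : p ∈ Set.Icc 0 1) (hν : IIDBits p ν) {k : ℕ}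
    (r : Fin k → Bool) : iIndepSet (startsWith r) ν := by
  rw [iIndepSet_iff_meas_biInter (measurableSet_startsWith r)]
  intro S
  rw [measure_biInter_startsWith hp hν]
  simp [measure_startsWith hp hν, ENNReal.ofReal]

lemma hasLaw_prefCount (hp : p ∈ Set.Icc 0 1) (hν : IIDBits p ν) (lam : NNReal) {k : ℕ}
    (r : Fin k → Bool) :
    HasLaw (fun ω : ℕ × (ℕ → ℕ → Bool) => prefCount ω.2 ω.1 k r)
      (poissonMeasure (lam * (wordProb p r).toNNReal)) (poModel lam ν) := by
  have := hν.1
  simp only [prefCount_eq_sum_indicator]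
  exact hasLaw_poisson_thinning (measurableSet_startsWith r) (iIndepSet_startsWith hp hν r)
    (measure_startsWith hp hν r) lam

end IIDBits

/-- The probability `1 - (1 + t) e⁻ᵗ` that a `Po(t)` variable is at least two. -/
noncomputable def poissonTwoLe (t : ℝ) : ℝ := 1 - (1 + t) * exp (-t)

lemma poissonMeasure_real_setOf_two_le (r : NNReal) :
    (poissonMeasure r).real {n | 2 ≤ n} = poissonTwoLe r := by
  have hcompl : {n : ℕ | 2 ≤ n}ᶜ = ({0, 1} : Finset ℕ) := by
    ext n
    simp only [Set.mem_compl_iff, Set.mem_ofPred_eq, Finset.coe_insert, Finset.coe_singleton,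
      Set.mem_insert_iff, Set.mem_singleton_iff]
    lia
  rw [← compl_compl {n : ℕ | 2 ≤ n}, probReal_compl_eq_one_sub .of_discrete, hcompl,
    ← sum_measureReal_singleton, Finset.sum_pair zero_ne_one]
  simp only [poissonMeasure_real_singleton, pow_zero, pow_one, Nat.factorial_zero,
    Nat.factorial_one, Nat.cast_one, div_one, mul_one, poissonTwoLe]
  ring

lemma integral_fracFilledPo {p : ℝ} {ν : Measure (ℕ → ℕ → Bool)} (hp : p ∈ Set.Icc 0 1)
    (hν : IIDBits p ν) (lam : NNReal) (k : ℕ) :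
    ∫ ω, fracFilledPo k ω ∂poModel lam ν =
      (∑ r : Fin k → Bool, poissonTwoLe (lam * wordProb p r)) / 2 ^ k := by
  have := hν.1
  have : IsFiniteMeasure (poModel lam ν) := by unfold poModel; infer_instance
  let filled (r : Fin k → Bool) : Set (ℕ × (ℕ → ℕ → Bool)) := {ω | 2 ≤ prefCount ω.2 ω.1 k r}
  have hlaw := hasLaw_prefCount (k := k) hp hν lam
  have hmeas (r : Fin k → Bool) : NullMeasurableSet (filled r) (poModel lam ν) :=
    (hlaw r).aemeasurable.nullMeasurableSet_preimage (s := {n | 2 ≤ n}) .of_discrete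
  have hprob (r : Fin k → Bool) :
      (poModel lam ν).real (filled r) = poissonTwoLe (lam * wordProb p r) := by
    rw [(hlaw r).measureReal_eq (p := (2 ≤ ·)) .of_discrete, poissonMeasure_real_setOf_two_le,
      NNReal.coe_mul, Real.coe_toNNReal _ (wordProb_nonneg hp r)]
  have hsum : fracFilledPo k =
      fun ω => (∑ r : Fin k → Bool, (filled r).indicator (fun _ => (1 : ℝ)) ω) / 2 ^ k := by
    ext ω
    classical
    simp only [fracFilledPo, fillCountPo, fillCount, Finset.card_filter, Nat.cast_sum,
      Nat.cast_ite, Nat.cast_one, Nat.cast_zero, Set.indicator_apply, filled, Set.mem_ofPred_eq]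
  rw [hsum, integral_div, integral_finsetSum]
  · congr 1
    refine Finset.sum_congr rfl fun r _ => ?_
    rw [integral_indicator₀ (hmeas r)]
    simp [hprob]
  · exact fun r _ => (integrable_const _).indicator₀ (hmeas r)

lemma poissonTwoLe_nonneg (t : ℝ) : 0 ≤ poissonTwoLe t := by
  have := mul_le_mul_of_nonneg_right (add_one_le_exp t) (exp_pos (-t)).le
  rw [← exp_add, add_neg_cancel, exp_zero] at this
  unfold poissonTwoLe
  linarith

lemma poissonTwoLe_le_one {t : ℝ} (ht : 0 ≤ t) : poissonTwoLe t ≤ 1 :=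
  sub_le_self _ (by positivity)

lemma poissonTwoLe_le_self {t : ℝ} (ht : 0 ≤ t) : poissonTwoLe t ≤ t := by
  have hexp := one_sub_le_exp_neg t
  have := mul_nonneg ht (exp_pos (-t)).le
  unfold poissonTwoLe
  linarith

lemma one_sub_poissonTwoLe_le {t : ℝ} (ht : 0 < t) : 1 - poissonTwoLe t ≤ 2 * t⁻¹ := by
  have hexp := quadratic_le_exp_of_nonneg ht.le
  rw [poissonTwoLe, sub_sub_cancel, exp_neg, ← div_eq_mul_inv, ← div_eq_mul_inv,
    div_le_div_iff₀ (exp_pos t) ht]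
  linarith

lemma exp_neg_mul_abs_le {c : ℝ} (hc : 0 < c) (x : ℝ) :
    exp (-(c * |x|)) ≤ (1 + 2 / c ^ 2) / (1 + x ^ 2) := by
  have hexp : 1 + (c * x) ^ 2 / 2 ≤ exp (c * |x|) := by
    have := quadratic_le_exp_of_nonneg (mul_nonneg hc.le (abs_nonneg x))
    rw [mul_pow, sq_abs, ← mul_pow] at this
    linarith [mul_nonneg hc.le (abs_nonneg x)]
  have hid : (1 + 2 / c ^ 2) * (1 + (c * x) ^ 2 / 2) =
      1 + x ^ 2 + (2 / c ^ 2 + (c * x) ^ 2 / 2) := by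
    field_simp
    ring
  rw [exp_neg, inv_le_comm₀ (exp_pos _) (by positivity), inv_div, div_le_iff₀' (by positivity)]
  refine le_trans ?_ (mul_le_mul_of_nonneg_left hexp (by positivity))
  rw [hid]
  linarith [show 0 ≤ 2 / c ^ 2 + (c * x) ^ 2 / 2 by positivity]

lemma abs_poissonTwoLe_exp_sub_stdGaussianCDF_le {c : ℝ} (hc : 0 < c) (x : ℝ) :
    |poissonTwoLe (exp (c * x)) - Φ x| ≤ 2 * (1 + 2 / c ^ 2) / (1 + x ^ 2) := by
  have hgauss : 2 / (1 + x ^ 2) ≤ 2 * (1 + 2 / c ^ 2) / (1 + x ^ 2) := by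
    gcongr
    linarith [show 0 ≤ 2 / c ^ 2 by positivity]
  have hexp : 2 * exp (-(c * |x|)) ≤ 2 * (1 + 2 / c ^ 2) / (1 + x ^ 2) := by
    rw [mul_div_assoc]
    exact mul_le_mul_of_nonneg_left (exp_neg_mul_abs_le hc x) zero_le_two
  rcases le_total 0 x with hx | hx
  · rw [abs_of_nonneg hx, exp_neg] at hexp
    rw [← abs_neg, neg_sub, ← sub_sub_sub_cancel_left _ _ 1, abs_sub_comm]
    exact abs_sub_le_of_nonneg_of_le (sub_nonneg.2 (cdf_le_one _ _))
      ((one_sub_stdGaussianCDF_le hx).trans hgauss)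
      (sub_nonneg.2 (poissonTwoLe_le_one (exp_pos _).le))
      ((one_sub_poissonTwoLe_le (exp_pos _)).trans hexp)
  · rw [abs_of_nonpos hx, mul_neg, neg_neg] at hexp
    exact abs_sub_le_of_nonneg_of_le (poissonTwoLe_nonneg _)
      ((poissonTwoLe_le_self (exp_pos _).le).trans (by linarith [exp_pos (c * x)]))
      (cdf_nonneg _ _) ((stdGaussianCDF_le hx).trans hgauss)

lemma integral_fracFilledPo_eq_signAvg_pow {p q : ℝ} {ν : Measure (ℕ → ℕ → Bool)} (hq : 0 < q)
    (hqp : q < p) (hpq : q = 1 - p) (hν : IIDBits p ν) {lam : NNReal} (hlam : 0 < lam) (k : ℕ) :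
    ∫ ω, fracFilledPo k ω ∂poModel lam ν =
      (signAvg ^ k) (fun x => poissonTwoLe (exp (log (p / q) / 2 * x)))
        ((log lam - k * log (1 / √(p * q))) / (log (p / q) / 2)) := by
  have hp : 0 < p := hq.trans hqp
  have hlog : 0 < log (p / q) := log_pos ((one_lt_div hq).2 hqp)
  have hexp (r : Fin k → Bool) : lam * wordProb p r = exp (log (p / q) / 2 *
      ((log lam - k * log (1 / √(p * q))) / (log (p / q) / 2) + wordSum r)) := by
    rw [wordProb_eq_exp hp hq hpq, mul_add, mul_div_cancel₀ _ (by positivity)]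
    nth_rw 1 [← exp_log (NNReal.coe_pos.2 hlam)]
    rw [← exp_add]
    ring_nf
  have hsum := sum_apply_add_wordSum k (fun x => poissonTwoLe (exp (log (p / q) / 2 * x)))
    ((log lam - k * log (1 / √(p * q))) / (log (p / q) / 2))
  rw [integral_fracFilledPo ⟨hp.le, by linarith⟩ hν]
  simp only [hexp, hsum]
  rw [mul_div_cancel_left₀ _ (by positivity)]

theorem exists_abs_integral_fracFilledPo_sub_stdGaussianCDF_le {p q : ℝ}
    {ν : Measure (ℕ → ℕ → Bool)} (hq : 0 < q) (hqp : q < p) (hpq : q = 1 - p) (hν : IIDBits p ν) :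
    ∃ C > 0, ∀ lam : NNReal, 0 < lam → ∀ k : ℕ,
      |(∫ ω, fracFilledPo k ω ∂poModel lam ν) -
        Φ ((log lam - k * log (1 / √(p * q))) / (log (p / q) / 2) / √(k + 1))| ≤ C / √(k + 1) := by
  obtain ⟨C, hC, hbound⟩ := exists_abs_signAvg_pow_sub_stdGaussianCDF_le
  have hlog : 0 < log (p / q) / 2 := half_pos (log_pos ((one_lt_div hq).2 hqp))
  refine ⟨15 * (2 * (1 + 2 / (log (p / q) / 2) ^ 2)) + C, by positivity, fun lam hlam k => ?_⟩
  rw [integral_fracFilledPo_eq_signAvg_pow hq hqp hpq hν hlam]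
  exact hbound _ _ (abs_poissonTwoLe_exp_sub_stdGaussianCDF_le hlog) _ _

/-! ### The critical depth -/

lemma div_rpow_three_halves_mul_sqrt {L : ℝ} (hL : 0 < L) (c x y : ℝ) :
    c / L ^ ((3 : ℝ) / 2) * x * √y = c * x / L * √(y / L) := by
  have hpow : L ^ ((3 : ℝ) / 2) = L * √L := by
    rw [sqrt_eq_rpow, ← rpow_one_add' hL.le (by norm_num)]
    norm_num
  rw [hpow, sqrt_div' _ hL.le]
  ring

lemma abs_sub_le_of_abs_sq_sub_le {l s A β : ℝ} (hl : 0 ≤ l) (hs : 1 ≤ s)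
    (h : |s ^ 2 - (l ^ 2 - β * l)| ≤ A) : |l - s| ≤ A + |β| := by
  have hA : 0 ≤ A := (abs_nonneg _).trans h
  have hsq : |l - s| * (l + s) ≤ A + |β| * l := calc
    |l - s| * (l + s) = |β * l - (s ^ 2 - (l ^ 2 - β * l))| := by
      rw [← abs_of_nonneg (show 0 ≤ l + s by linarith), ← abs_mul]
      ring_nf
    _ ≤ |β * l| + |s ^ 2 - (l ^ 2 - β * l)| := abs_sub _ _
    _ ≤ A + |β| * l := by
      rw [abs_mul, abs_of_nonneg hl]
      linarith
  refine le_of_mul_le_mul_right (hsq.trans ?_) (show 0 < l + s by linarith)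
  rw [add_mul]
  exact add_le_add (le_mul_of_one_le_right hA (by linarith))
    (mul_le_mul_of_nonneg_left (by linarith) (abs_nonneg β))

lemma abs_div_div_sqrt_sub_le {L c y A x : ℝ} (hL : 0 < L) (hc : 0 < c) (hy : 0 ≤ y) {k : ℕ}
    (h : |(k : ℝ) - (y / L - c / L ^ ((3 : ℝ) / 2) * x * √y)| ≤ A) :
    |(y - k * L) / c / √(k + 1) - x| ≤ (A * L / c + |x| * (A + 1 + |c * x / L|)) / √(k + 1) := by
  rw [div_rpow_three_halves_mul_sqrt hL] at h
  set l := √(y / L)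
  set s := √((k : ℝ) + 1)
  have hl : l ^ 2 = y / L := sq_sqrt (by positivity)
  have hs : s ^ 2 = k + 1 := sq_sqrt (by positivity)
  have hs1 : 1 ≤ s := one_le_sqrt.2 (by linarith [k.cast_nonneg (α := ℝ)])
  have hs0 : 0 < s := by linarith
  have hls : |l - s| ≤ A + 1 + |c * x / L| := by
    refine abs_sub_le_of_abs_sq_sub_le (sqrt_nonneg _) hs1 ?_
    rw [hs, hl, add_sub_right_comm]
    exact (abs_add_le _ _).trans (add_le_add h abs_one.le)
  have hdecomp : (y - k * L) / c / s - x =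
      (x * (l - s) - (k - (y / L - c * x / L * l)) * (L / c)) / s := by
    field_simp
    ring
  rw [hdecomp, abs_div, abs_of_pos hs0]
  gcongr
  refine (abs_sub _ _).trans ?_
  rw [abs_mul, abs_mul, abs_of_pos (div_pos hL hc), add_comm, mul_div_assoc A]
  gcongr

/-- Lemma 1 of Janson–Szpankowski: for `p ∈ (1/2, 1)`, if
`k = log_{1/√(pq)} λ - (ln(p/q) / (2 ln^{3/2}(1/√(pq)))) Φ⁻¹(α) √(ln λ) + O(1)`,
then `E X̄_k(λ) = α + O(k^{-1/2})`. -/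
theorem expectation_fracFilledPo_near_alpha
    (p q α : ℝ) (hp : 1 / 2 < p) (hp1 : p < 1) (hq : q = 1 - p) (hα : 0 < α) (hα1 : α < 1)
    (ν : Measure (ℕ → ℕ → Bool)) (hν : IIDBits p ν)
    (xα : ℝ) (hxα : ProbabilityTheory.cdf (ProbabilityTheory.gaussianReal 0 1) xα = α) :
    ∀ A > (0 : ℝ), ∃ C > (0 : ℝ), ∀ lam : NNReal, 3 ≤ lam → ∀ k : ℕ, 1 ≤ k →
      |(k : ℝ) -
          (Real.logb (1 / Real.sqrt (p * q)) lam -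
            Real.log (p / q) / (2 * Real.log (1 / Real.sqrt (p * q)) ^ ((3 : ℝ) / 2))
              * xα * Real.sqrt (Real.log lam))| ≤ A →
        |(∫ ω, fracFilledPo k ω ∂poModel lam ν) - α| ≤ C / Real.sqrt k := by
  intro A hA
  have hq0 : 0 < q := by linarith
  have hc : 0 < log (p / q) / 2 := half_pos (log_pos ((one_lt_div hq0).2 (by linarith)))
  have hL : 0 < log (1 / √(p * q)) := by
    have : √(p * q) < 1 := (sqrt_lt' one_pos).2 (by nlinarith)
    exact log_pos ((one_lt_div (sqrt_pos.2 (by nlinarith))).2 this)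
  obtain ⟨C, hC, hbound⟩ :=
    exists_abs_integral_fracFilledPo_sub_stdGaussianCDF_le hq0 (by linarith) hq hν
  set c := log (p / q) / 2
  set L := log (1 / √(p * q))
  set D := A * L / c + |xα| * (A + 1 + |c * xα / L|)
  refine ⟨C + D, by positivity, fun lam hlam k hk h => ?_⟩
  have hlam1 : (1 : ℝ) ≤ lam := by exact_mod_cast le_trans (by norm_num) hlam
  rw [logb, ← div_div] at h
  have hdet := abs_div_div_sqrt_sub_le hL hc (log_nonneg hlam1) h
  calc |(∫ ω, fracFilledPo k ω ∂poModel lam ν) - α|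
      ≤ C / √(k + 1) + D / √(k + 1) := by
        rw [← hxα]
        exact (abs_sub_le _ _ _).trans (add_le_add (hbound lam (by positivity) k)
          ((abs_stdGaussianCDF_sub_le _ _).trans hdet))
    _ ≤ (C + D) / √k := by
        rw [← add_div]
        gcongr
        linarith
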